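/- Let c, d > 2, n = c+d, and let J ⊆ ℂ[S_{αβ}, S_κ, S_{γδ}] be the ideal generated by the Plücker-type relations S_{ij}S_{kl} − S_{ik}S_{jl} + S_{il}S_{jk} for i<j<k<l ≤ c, S_{ij}S_k − S_{ik}S_j + S_iS_{jk} for i<j<k ≤ c, S_jS_{kl} − S_kS_{jl} + S_lS_{jk} for c+1 ≤ j<k<l, and S_{ij}S_{kl} − S_{ik}S_{jl} + S_{il}S_{jk} for c+1 ≤ i<j<k<l. Then ℂ[S]/J is isomorphic to the tensor product over ℂ of the homogeneous coordinate rings of the Grassmannians G(2,c+1) and G(2,d+1), and in particular is an integral domain. -/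

import Mathlib

set_option synthInstance.maxHeartbeats 800000
set_option maxHeartbeats 2000000

open MvPolynomial

/-- Index set for pairs `i < j` in `Fin n`. -/
abbrev PIdx (n : ℕ) := {p : Fin n × Fin n // p.1 < p.2}

/-- Index set for the variables of `B`: pair variables `S_{αβ}` (`α < β ≤ c`) and
`S_{γδ}` (`c + 1 ≤ γ < δ`), indexed by pairs lying inside `{1,…,c}` or inside
`{c+1,…,n}`, together with the single variables `S_κ`, `1 ≤ κ ≤ n`. -/
abbrev BVar (c n : ℕ) :=
  {p : PIdx n // p.val.2.val < c ∨ c ≤ p.val.1.val} ⊕ Fin n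

/-- The pair variable `S_{ij}`. -/
noncomputable def SP {c n : ℕ} (i j : Fin n) (hij : i < j)
    (h : j.val < c ∨ c ≤ i.val) : MvPolynomial (BVar c n) ℂ :=
  X (Sum.inl ⟨⟨(i, j), hij⟩, h⟩)

/-- The single variable `S_κ`. -/
noncomputable def S1 {c n : ℕ} (κ : Fin n) : MvPolynomial (BVar c n) ℂ :=
  X (Sum.inr κ)

/-- The Plücker-type relations generating the ideal `𝔟 ⊆ B`:
`S_{ij}S_{kl} - S_{ik}S_{jl} + S_{il}S_{jk}` for `i < j < k < l ≤ c`,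
`S_{ij}S_k - S_{ik}S_j + S_iS_{jk}` for `i < j < k ≤ c`,
`S_jS_{kl} - S_kS_{jl} + S_lS_{jk}` for `c + 1 ≤ j < k < l`, and
`S_{ij}S_{kl} - S_{ik}S_{jl} + S_{il}S_{jk}` for `c + 1 ≤ i < j < k < l`. -/
def relSet (c n : ℕ) : Set (MvPolynomial (BVar c n) ℂ) :=
  {P |
    (∃ (i j k l : Fin n) (hij : i < j) (hjk : j < k) (hkl : k < l) (h : l.val < c),
      P = SP i j hij (Or.inl (by have := Fin.lt_def.mp ((hjk.trans hkl)); omega)) *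
            SP k l hkl (Or.inl (by omega)) -
          SP i k (hij.trans hjk) (Or.inl (by have := Fin.lt_def.mp hkl; omega)) *
            SP j l (hjk.trans hkl) (Or.inl (by omega)) +
          SP i l (hij.trans (hjk.trans hkl)) (Or.inl (by omega)) *
            SP j k hjk (Or.inl (by have := Fin.lt_def.mp hkl; omega))) ∨
    (∃ (i j k : Fin n) (hij : i < j) (hjk : j < k) (h : k.val < c),
      P = SP i j hij (Or.inl (by have := Fin.lt_def.mp hjk; omega)) * S1 k -
          SP i k (hij.trans hjk) (Or.inl (by omega)) * S1 j +
          S1 i * SP j k hjk (Or.inl (by omega))) ∨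
    (∃ (j k l : Fin n) (hjk : j < k) (hkl : k < l) (h : c ≤ j.val),
      P = S1 j * SP k l hkl (Or.inr (by have := Fin.lt_def.mp hjk; omega)) -
          S1 k * SP j l (hjk.trans hkl) (Or.inr (by omega)) +
          S1 l * SP j k hjk (Or.inr (by omega))) ∨
    (∃ (i j k l : Fin n) (hij : i < j) (hjk : j < k) (hkl : k < l) (h : c ≤ i.val),
      P = SP i j hij (Or.inr (by omega)) *
            SP k l hkl (Or.inr (by
              have h1 := Fin.lt_def.mp hij; have h2 := Fin.lt_def.mp hjk; omega)) -
          SP i k (hij.trans hjk) (Or.inr (by omega)) *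
            SP j l (hjk.trans hkl) (Or.inr (by have := Fin.lt_def.mp hij; omega)) +
          SP i l (hij.trans (hjk.trans hkl)) (Or.inr (by omega)) *
            SP j k hjk (Or.inr (by have := Fin.lt_def.mp hij; omega)))}

/-- The variable `T_{ij}` of the Plücker coordinate ring. -/
noncomputable def Tv {m : ℕ} (i j : Fin m) (h : i < j) : MvPolynomial (PIdx m) ℂ :=
  X ⟨(i, j), h⟩

/-- The set of Plücker relations for `G(2,m)`. -/
def pluckerSet (m : ℕ) : Set (MvPolynomial (PIdx m) ℂ) :=
  {P | ∃ (i j k l : Fin m) (hij : i < j) (hjk : j < k) (hkl : k < l),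
    P = Tv i j hij * Tv k l hkl - Tv i k (hij.trans hjk) * Tv j l (hjk.trans hkl)
          + Tv i l (hij.trans (hjk.trans hkl)) * Tv j k hjk}

/-- The homogeneous coordinate ring of the Grassmannian `G(2,m)`. -/
noncomputable abbrev GrRing (m : ℕ) :=
  MvPolynomial (PIdx m) ℂ ⧸ Ideal.span (pluckerSet m)

/-!
Modulo the three-term relations, a product `T_{il} T_{jk}` of nested pairs `i < j < k < l` equals
`T_{ik} T_{jl} - T_{ij} T_{kl}`, and this replacement lowers the sum of the squared lengths of the
pairs; hence every polynomial is congruent to a combination of standard monomials, those in which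
no pair is strictly nested in another. Sending `T_{ij}` to the minor on the columns `i, j` of a
generic two-row matrix kills the relations, and the images of the standard monomials are linearly
independent because their leading (diagonal) terms are distinct. So the three-term relations
generate the kernel of this map, and the coordinate ring of `G(2, m)` embeds in a polynomial ring.

Reading `S_m` as `S_{m,c+1}` for `m ≤ c`, and as the coordinate pairing `m` with one new smallest
index for `m > c`, splits the variables and the relations into the Plücker systems of `G(2, c + 1)`
and `G(2, d + 1)`. The quotient is therefore the tensor product of the two coordinate rings, and
since `ℂ` is a field this tensor product again embeds in a polynomial ring.
-/

open scoped TensorProduct MonomialOrder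

section MonicPolynomials

variable {σ κ R : Type*} [CommRing R]

theorem linearIndependent_of_monic_of_injective_degree (m : MonomialOrder σ)
    {P : κ → MvPolynomial σ R} (hP : ∀ k, m.Monic (P k))
    (hinj : Function.Injective fun k => m.degree (P k)) : LinearIndependent R P := by
  classical
  rw [linearIndependent_iff']
  intro S a hsum k hk
  by_contra hak
  obtain ⟨k₀, hk₀, hmax⟩ := (S.filter (a · ≠ 0)).exists_max_image
    (fun k => m.toSyn (m.degree (P k))) ⟨k, Finset.mem_filter.mpr ⟨hk, hak⟩⟩
  obtain ⟨hk₀S, hak₀⟩ := Finset.mem_filter.mp hk₀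
  have hother : ∀ k ∈ S, k ≠ k₀ → coeff (m.degree (P k₀)) (a k • P k) = 0 := by
    intro k hk hne
    by_cases hak : a k = 0
    · rw [hak, zero_smul, coeff_zero]
    · have hlt : m.degree (P k) ≺[m] m.degree (P k₀) :=
        lt_of_le_of_ne (hmax k (Finset.mem_filter.mpr ⟨hk, hak⟩)) fun h =>
          hne (hinj (m.toSyn.injective h))
      rw [coeff_smul, m.coeff_eq_zero_of_lt hlt, smul_zero]
  have hcoeff : coeff (m.degree (P k₀)) (∑ k ∈ S, a k • P k) = a k₀ := by
    rw [coeff_sum, Finset.sum_eq_single_of_mem k₀ hk₀S hother, coeff_smul, (hP k₀).coeff_degree,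
      smul_eq_mul, mul_one]
  exact hak₀ (by rw [← hcoeff, hsum, coeff_zero])

end MonicPolynomials

section TensorProducts

variable {σ τ R : Type*} [CommRing R]

theorem ker_tensorProductMap_mkₐ {A B : Type*} [CommRing A] [Algebra R A]
    [CommRing B] [Algebra R B] (I : Ideal A) (J : Ideal B) :
    RingHom.ker (Algebra.TensorProduct.map (Ideal.Quotient.mkₐ R I) (Ideal.Quotient.mkₐ R J)) =
      I.map (Algebra.TensorProduct.includeLeft : A →ₐ[R] A ⊗[R] B) ⊔
        J.map (Algebra.TensorProduct.includeRight : B →ₐ[R] A ⊗[R] B) := by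
  rw [Algebra.TensorProduct.map_ker _ _ (Ideal.Quotient.mkₐ_surjective R I)
    (Ideal.Quotient.mkₐ_surjective R J)]
  congr 2 <;> exact Ideal.Quotient.mkₐ_ker R _

theorem map_tensorEquivSum_sup (I : Ideal (MvPolynomial σ R)) (J : Ideal (MvPolynomial τ R)) :
    (I.map (Algebra.TensorProduct.includeLeft : _ →ₐ[R] _ ⊗[R] MvPolynomial τ R) ⊔
      J.map (Algebra.TensorProduct.includeRight : _ →ₐ[R] MvPolynomial σ R ⊗[R] _)).map
        (tensorEquivSum R σ τ R).toRingHom =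
      I.map (rename (R := R) Sum.inl) ⊔ J.map (rename (R := R) Sum.inr) := by
  have hinl : (tensorEquivSum R σ τ R).toAlgHom.comp Algebra.TensorProduct.includeLeft =
      rename Sum.inl := algHom_ext fun i => by simp
  have hinr : (tensorEquivSum R σ τ R).toAlgHom.comp Algebra.TensorProduct.includeRight =
      rename Sum.inr := algHom_ext fun i => by simp
  rw [← hinl, ← hinr, Ideal.map_sup]
  congr 1 <;> exact Ideal.map_map _ _

/-- Presentations of algebras multiply: relations `I` among the variables `σ` and relations `J`
among the variables `τ` together present the tensor product. -/
noncomputable def quotientSumAlgEquivTensor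
    (I : Ideal (MvPolynomial σ R)) (J : Ideal (MvPolynomial τ R)) :
    (MvPolynomial (σ ⊕ τ) R ⧸
        I.map (rename (R := R) Sum.inl) ⊔ J.map (rename (R := R) Sum.inr)) ≃ₐ[R]
      (MvPolynomial σ R ⧸ I) ⊗[R] (MvPolynomial τ R ⧸ J) :=
  (Ideal.quotientEquivAlg _ _ (tensorEquivSum R σ τ R)
      (by rw [ker_tensorProductMap_mkₐ]; exact (map_tensorEquivSum_sup I J).symm)).symm.trans
    (Ideal.quotientKerAlgEquivOfSurjective
      (f := Algebra.TensorProduct.map (Ideal.Quotient.mkₐ R I) (Ideal.Quotient.mkₐ R J))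
      (TensorProduct.map_surjective (Ideal.Quotient.mkₐ_surjective R I)
        (Ideal.Quotient.mkₐ_surjective R J)))

theorem isDomain_tensorProduct_quotient_ker {K A B : Type*} [Field K] [CommRing A] [Algebra K A]
    [CommRing B] [Algebra K B] (f : A →ₐ[K] MvPolynomial σ K) (g : B →ₐ[K] MvPolynomial τ K) :
    IsDomain ((A ⧸ RingHom.ker f) ⊗[K] (B ⧸ RingHom.ker g)) :=
  let f' := Ideal.kerLiftAlg f
  let g' := Ideal.kerLiftAlg g
  have hinj : Function.Injective (Algebra.TensorProduct.map f' g') :=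
    TensorProduct.map_injective_of_flat_flat f'.toLinearMap g'.toLinearMap
      (Ideal.kerLiftAlg_injective f) (Ideal.kerLiftAlg_injective g)
  let e := (tensorEquivSum K σ τ K).toAlgHom.comp (Algebra.TensorProduct.map f' g')
  ((tensorEquivSum K σ τ K).injective.comp hinj).isDomain e.toRingHom

end TensorProducts

namespace Plucker

/-- The indices `i < j` of the Plücker coordinates of the Grassmannian of lines, for an arbitrary
linearly ordered index type; for `Fin m` this is `PIdx m`. -/
abbrev Pair (ι : Type*) [LinearOrder ι] := {p : ι × ι // p.1 < p.2}

variable {ι : Type*} [LinearOrder ι]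

/-- The left-hand side of the three-term Plücker relation on the indices `i < j < k < l`, with
`x` the values of the Plücker coordinates. -/
def threeTerm {A : Type*} [CommRing A] (x : Pair ι → A) {i j k l : ι}
    (hij : i < j) (hjk : j < k) (hkl : k < l) : A :=
  x ⟨(i, j), hij⟩ * x ⟨(k, l), hkl⟩ -
    x ⟨(i, k), hij.trans hjk⟩ * x ⟨(j, l), hjk.trans hkl⟩ +
    x ⟨(i, l), hij.trans (hjk.trans hkl)⟩ * x ⟨(j, k), hjk⟩

variable (R : Type*) [CommRing R]

variable (ι) in
/-- The ideal of three-term Plücker relations over `R`; for `ℂ` and `Fin m` it is the ideal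
defining `GrRing m`. -/
noncomputable def pluckerIdeal : Ideal (MvPolynomial (Pair ι) R) :=
  Ideal.span {P | ∃ (i j k l : ι) (hij : i < j) (hjk : j < k) (hkl : k < l),
    P = threeTerm X hij hjk hkl}

section StandardMonomials

/-- A monomial in the Plücker coordinates is standard if the pairs occurring in it form a chain
for the componentwise order, that is, are the columns of a semistandard tableau. -/
def IsStandard (s : Pair ι →₀ ℕ) : Prop := IsChain (· ≤ ·) (s.support : Set (Pair ι))

theorem IsStandard.mono {s t : Pair ι →₀ ℕ} (ht : IsStandard t) (h : s ≤ t) : IsStandard s :=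
  IsChain.mono (Finset.coe_subset.mpr (Finsupp.support_mono h)) ht

theorem IsStandard.exists_least {s : Pair ι →₀ ℕ} (hs : IsStandard s) (h : s ≠ 0) :
    ∃ p ∈ s.support, ∀ q ∈ s.support, p ≤ q := by
  obtain ⟨p, hp⟩ := s.support.exists_minimal (Finsupp.support_nonempty_iff.mpr h)
  exact ⟨p, hp.1, fun q hq => (hs.total hp.1 hq).elim id (hp.2 hq)⟩

theorem exists_nested_of_not_isStandard {s : Pair ι →₀ ℕ} (hs : ¬ IsStandard s) :
    ∃ (i j k l : ι) (hij : i < j) (hjk : j < k) (hkl : k < l) (t : Pair ι →₀ ℕ),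
      s = Finsupp.single ⟨(i, l), hij.trans (hjk.trans hkl)⟩ 1 +
        Finsupp.single ⟨(j, k), hjk⟩ 1 + t := by
  obtain ⟨p, hp, q, hq, hpq₁, hqp₂⟩ :
      ∃ p ∈ s.support, ∃ q ∈ s.support, p.1.1 < q.1.1 ∧ q.1.2 < p.1.2 := by
    by_contra! hcon
    refine hs fun p hp q hq _ => ?_
    have hpq := hcon p hp q hq
    have hqp := hcon q hq p hp
    change (_ ∧ _) ∨ (_ ∧ _)
    grind
  have hle : Finsupp.single p 1 + Finsupp.single q 1 ≤ s := by
    have hne : p ≠ q := fun h => hpq₁.ne (by rw [h])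
    intro r
    simp only [Finsupp.mem_support_iff] at hp hq
    simp only [Finsupp.add_apply, Finsupp.single_apply]
    grind
  obtain ⟨t, rfl⟩ := exists_add_of_le hle
  exact ⟨p.1.1, q.1.1, q.1.2, p.1.2, hpq₁, q.2, hqp₂, t, rfl⟩

end StandardMonomials

section Straightening

section Spread

variable [LocallyFiniteOrder ι]

/-- The sum of the squared lengths of the pairs occurring in a monomial, a measure that decreases
when a nested pair is straightened. -/
noncomputable def spread : (Pair ι →₀ ℕ) →+ ℕ :=
  Finsupp.weight fun p => (Finset.Ico p.1.1 p.1.2).card ^ 2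

theorem card_Ico_add_card_Ico {i j k : ι} (hij : i ≤ j) (hjk : j ≤ k) :
    (Finset.Ico i j).card + (Finset.Ico j k).card = (Finset.Ico i k).card := by
  rw [← Finset.card_union_of_disjoint (Finset.Ico_disjoint_Ico_consecutive i j k),
    Finset.Ico_union_Ico_eq_Ico hij hjk]

variable {i j k l : ι} (hij : i < j) (hjk : j < k) (hkl : k < l) (t : Pair ι →₀ ℕ)

theorem spread_disjoint_lt_spread_nested :
    spread (Finsupp.single ⟨(i, j), hij⟩ 1 + Finsupp.single ⟨(k, l), hkl⟩ 1 + t) <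
      spread (Finsupp.single ⟨(i, l), hij.trans (hjk.trans hkl)⟩ 1 +
        Finsupp.single ⟨(j, k), hjk⟩ 1 + t) := by
  have hik := card_Ico_add_card_Ico hij.le hjk.le
  have hil := card_Ico_add_card_Ico (hij.trans hjk).le hkl.le
  have hpos := Finset.card_pos.mpr (Finset.nonempty_Ico.mpr hjk)
  simp only [spread, map_add, Finsupp.weight_single, smul_eq_mul]
  nlinarith

theorem spread_crossing_lt_spread_nested :
    spread (Finsupp.single ⟨(i, k), hij.trans hjk⟩ 1 +
        Finsupp.single ⟨(j, l), hjk.trans hkl⟩ 1 + t) <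
      spread (Finsupp.single ⟨(i, l), hij.trans (hjk.trans hkl)⟩ 1 +
        Finsupp.single ⟨(j, k), hjk⟩ 1 + t) := by
  have hik := card_Ico_add_card_Ico hij.le hjk.le
  have hjl := card_Ico_add_card_Ico hjk.le hkl.le
  have hil := card_Ico_add_card_Ico (hij.trans hjk).le hkl.le
  have hij_pos := Finset.card_pos.mpr (Finset.nonempty_Ico.mpr hij)
  have hkl_pos := Finset.card_pos.mpr (Finset.nonempty_Ico.mpr hkl)
  simp only [spread, map_add, Finsupp.weight_single, smul_eq_mul]
  nlinarith [mul_pos hij_pos hkl_pos]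

end Spread

theorem monomial_threeTerm_mem_pluckerIdeal {i j k l : ι} (hij : i < j) (hjk : j < k)
    (hkl : k < l) (t : Pair ι →₀ ℕ) :
    monomial (Finsupp.single ⟨(i, j), hij⟩ 1 + Finsupp.single ⟨(k, l), hkl⟩ 1 + t) (1 : R) -
      monomial (Finsupp.single ⟨(i, k), hij.trans hjk⟩ 1 +
        Finsupp.single ⟨(j, l), hjk.trans hkl⟩ 1 + t) 1 +
      monomial (Finsupp.single ⟨(i, l), hij.trans (hjk.trans hkl)⟩ 1 +
        Finsupp.single ⟨(j, k), hjk⟩ 1 + t) 1 ∈ pluckerIdeal ι R := by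
  have hrel : threeTerm X hij hjk hkl * monomial t 1 ∈ pluckerIdeal ι R :=
    Ideal.mul_mem_right _ _ (Ideal.subset_span ⟨i, j, k, l, hij, hjk, hkl, rfl⟩)
  simpa only [threeTerm, X, add_mul, sub_mul, monomial_mul, mul_one] using hrel

theorem pluckerIdeal_sup_restrictSupport [LocallyFiniteOrder ι] :
    (pluckerIdeal ι R).restrictScalars R ⊔ restrictSupport R {s | IsStandard s} = ⊤ := by
  suffices hmonomial : ∀ s : Pair ι →₀ ℕ, monomial s (1 : R) ∈
      (pluckerIdeal ι R).restrictScalars R ⊔ restrictSupport R {s | IsStandard s} by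
    rw [eq_top_iff, ← restrictSupport_univ, restrictSupport_eq_span, Submodule.span_le]
    rintro _ ⟨s, -, rfl⟩
    exact hmonomial s
  intro s
  induction hn : spread s using Nat.strong_induction_on generalizing s with
  | _ n ih =>
  subst hn
  by_cases hs : IsStandard s
  · exact Submodule.mem_sup_right ((monomial_mem_restrictSupport R).mpr (.inl hs))
  · obtain ⟨i, j, k, l, hij, hjk, hkl, t, rfl⟩ := exists_nested_of_not_isStandard hs
    have hrel := Submodule.mem_sup_left (S := (pluckerIdeal ι R).restrictScalars R)
      (T := restrictSupport R {s | IsStandard s})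
      (monomial_threeTerm_mem_pluckerIdeal R hij hjk hkl t)
    have hdisjoint := ih _ (spread_disjoint_lt_spread_nested hij hjk hkl t) _ rfl
    have hcrossing := ih _ (spread_crossing_lt_spread_nested hij hjk hkl t) _ rfl
    exact (Submodule.add_mem_iff_right _ (Submodule.sub_mem _ hdisjoint hcrossing)).mp hrel

end Straightening

section Minors

/-- The position `(r, i)` in a `2 × ι` matrix. The lexicographic order puts the first row before
the second, so that the diagonal term of a minor is its leading term. -/
abbrev Entry (ι : Type*) := Fin 2 ×ₗ ι

/-- The `2 × 2` minor on the columns `p` of the generic `2 × ι` matrix. -/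
noncomputable def minor (p : Pair ι) : MvPolynomial (Entry ι) R :=
  X (toLex (0, p.1.1)) * X (toLex (1, p.1.2)) - X (toLex (0, p.1.2)) * X (toLex (1, p.1.1))

variable (ι) in
/-- The Plücker embedding on coordinates: each Plücker coordinate goes to the corresponding
minor. -/
noncomputable def toMinors : MvPolynomial (Pair ι) R →ₐ[R] MvPolynomial (Entry ι) R :=
  aeval (minor R)

theorem pluckerIdeal_le_ker_toMinors : pluckerIdeal ι R ≤ RingHom.ker (toMinors ι R) := by
  refine Ideal.span_le.mpr ?_
  rintro _ ⟨i, j, k, l, hij, hjk, hkl, rfl⟩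
  simp only [SetLike.mem_coe, RingHom.mem_ker, toMinors, threeTerm, map_add, map_sub, map_mul,
    aeval_X, minor]
  ring

theorem toMinors_monomial_one (s : Pair ι →₀ ℕ) :
    toMinors ι R (monomial s 1) = s.prod fun p n => minor R p ^ n := by
  rw [toMinors, aeval_monomial, map_one, one_mul]

/-- The exponent of the diagonal term of the minor on the columns `p`. -/
noncomputable def diagExp (p : Pair ι) : Entry ι →₀ ℕ :=
  Finsupp.single (toLex (0, p.1.1)) 1 + Finsupp.single (toLex (1, p.1.2)) 1

theorem minor_eq_monomial_sub_monomial (p : Pair ι) :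
    minor R p = monomial (diagExp p) 1 -
      monomial (Finsupp.single (toLex (0, p.1.2)) 1 + Finsupp.single (toLex (1, p.1.1)) 1) 1 := by
  simp only [minor, diagExp, X, monomial_mul, mul_one]

/-- The exponent of the leading term of the product of minors with exponents `s`. -/
noncomputable def leadExp : (Pair ι →₀ ℕ) →+ (Entry ι →₀ ℕ) := Finsupp.weight diagExp

theorem leadExp_row_zero_ne_zero {s : Pair ι →₀ ℕ} {i : ι} :
    leadExp s (toLex (0, i)) ≠ 0 ↔ ∃ p ∈ s.support, p.1.1 = i := by
  have hdiag (p : Pair ι) : diagExp p (toLex (0, i)) = if p.1.1 = i then 1 else 0 := by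
    simp [diagExp, Finsupp.single_apply]
  simp only [leadExp, Finsupp.weight_apply, Finsupp.sum, Finsupp.finsetSum_apply,
    Finsupp.smul_apply, smul_eq_mul, hdiag, ne_eq, Finset.sum_eq_zero_iff]
  grind

theorem leadExp_row_one_ne_zero {s : Pair ι →₀ ℕ} {i : ι} :
    leadExp s (toLex (1, i)) ≠ 0 ↔ ∃ p ∈ s.support, p.1.2 = i := by
  have hdiag (p : Pair ι) : diagExp p (toLex (1, i)) = if p.1.2 = i then 1 else 0 := by
    simp [diagExp, Finsupp.single_apply]
  simp only [leadExp, Finsupp.weight_apply, Finsupp.sum, Finsupp.finsetSum_apply,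
    Finsupp.smul_apply, smul_eq_mul, hdiag, ne_eq, Finset.sum_eq_zero_iff]
  grind

theorem least_le_of_leadExp_eq {s t : Pair ι →₀ ℕ} (h : leadExp s = leadExp t) {p q : Pair ι}
    (hp : p ∈ s.support) (hq : ∀ r ∈ t.support, q ≤ r) : q ≤ p := by
  obtain ⟨r, hr, hrp⟩ := leadExp_row_zero_ne_zero.mp
    (h ▸ leadExp_row_zero_ne_zero.mpr ⟨p, hp, rfl⟩)
  obtain ⟨r', hr', hrp'⟩ := leadExp_row_one_ne_zero.mp
    (h ▸ leadExp_row_one_ne_zero.mpr ⟨p, hp, rfl⟩)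
  exact ⟨(hq r hr).1.trans_eq hrp, (hq r' hr').2.trans_eq hrp'⟩

theorem leadExp_eq_zero {s : Pair ι →₀ ℕ} : leadExp s = 0 ↔ s = 0 := by
  refine ⟨fun h => by_contra fun hs => ?_, fun h => by rw [h, map_zero]⟩
  obtain ⟨p, hp⟩ := Finsupp.support_nonempty_iff.mpr hs
  exact leadExp_row_zero_ne_zero.mpr ⟨p, hp, rfl⟩ (DFunLike.congr_fun h _)

theorem IsStandard.le_of_leadExp_eq {s t : Pair ι →₀ ℕ} (hs : IsStandard s)
    (ht : IsStandard t) (h : leadExp s = leadExp t) : s ≤ t := by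
  have hsub : leadExp (s - t) = leadExp (t - s) := by
    have hcomm : s + (t - s) = t + (s - t) := by
      ext p
      simp only [Finsupp.add_apply, Finsupp.tsub_apply]
      omega
    have hlead := congrArg leadExp hcomm
    rw [map_add, map_add, h] at hlead
    exact (add_left_cancel hlead).symm
  by_contra hst
  have hst_ne : s - t ≠ 0 := fun h0 => hst (tsub_eq_zero_iff_le.mp h0)
  have hts_ne : t - s ≠ 0 := by rwa [ne_eq, ← leadExp_eq_zero, ← hsub, leadExp_eq_zero]
  obtain ⟨p, hp, hp_least⟩ := (hs.mono tsub_le_self).exists_least hst_ne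
  obtain ⟨q, hq, hq_least⟩ := (ht.mono tsub_le_self).exists_least hts_ne
  obtain rfl : p = q := le_antisymm (least_le_of_leadExp_eq hsub.symm hq hp_least)
    (least_le_of_leadExp_eq hsub hp hq_least)
  simp only [Finsupp.mem_support_iff, Finsupp.tsub_apply] at hp hq
  omega

theorem leadExp_injOn : Set.InjOn leadExp {s : Pair ι →₀ ℕ | IsStandard s} :=
  fun _ hs _ ht h => (hs.le_of_leadExp_eq ht h).antisymm (ht.le_of_leadExp_eq hs h.symm)

variable [Finite ι]

instance : Finite (Entry ι) := inferInstanceAs (Finite (Fin 2 × ι))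

theorem antidiagExp_lt_diagExp (p : Pair ι) :
    (Finsupp.single (toLex (0, p.1.2)) 1 + Finsupp.single (toLex (1, p.1.1)) 1 : Entry ι →₀ ℕ)
      ≺[MonomialOrder.lex] diagExp p := by
  rw [MonomialOrder.lex_lt_iff, Finsupp.Lex.lt_iff]
  have hlt : toLex (0, p.1.1) < (toLex (0, p.1.2) : Entry ι) :=
    Prod.Lex.toLex_lt_toLex.mpr (.inr ⟨rfl, p.2⟩)
  refine ⟨toLex (0, p.1.1), fun e he => ?_, ?_⟩
  · have hfst : e ≠ toLex (0, p.1.1) := he.ne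
    have hsnd : e ≠ toLex (0, p.1.2) := (he.trans hlt).ne
    have hrow : ∀ k, e ≠ toLex (1, k) := fun k =>
      (he.trans (Prod.Lex.toLex_lt_toLex.mpr (.inl Fin.zero_lt_one))).ne
    simp [diagExp, hfst.symm, hsnd.symm, (hrow _).symm]
  · simp [diagExp, p.2.ne']

theorem degree_antidiag_lt_degree_diag [Nontrivial R] (p : Pair ι) :
    MonomialOrder.lex.degree (monomial (Finsupp.single (toLex (0, p.1.2)) 1 +
        Finsupp.single (toLex (1, p.1.1)) 1) (1 : R)) ≺[MonomialOrder.lex]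
      MonomialOrder.lex.degree (monomial (diagExp p) (1 : R)) := by
  classical
  simpa only [MonomialOrder.degree_monomial, if_neg one_ne_zero] using antidiagExp_lt_diagExp p

theorem monic_minor (p : Pair ι) : MonomialOrder.lex.Monic (minor R p) := by
  nontriviality R
  rw [minor_eq_monomial_sub_monomial, MonomialOrder.Monic,
    MonomialOrder.leadingCoeff_sub_of_lt (degree_antidiag_lt_degree_diag R p),
    MonomialOrder.leadingCoeff_monomial]

theorem degree_minor [Nontrivial R] (p : Pair ι) :
    MonomialOrder.lex.degree (minor R p) = diagExp p := by
  classical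
  rw [minor_eq_monomial_sub_monomial,
    MonomialOrder.degree_sub_of_lt (degree_antidiag_lt_degree_diag R p),
    MonomialOrder.degree_monomial, if_neg one_ne_zero]

theorem monic_toMinors_monomial (s : Pair ι →₀ ℕ) :
    MonomialOrder.lex.Monic (toMinors ι R (monomial s 1)) := by
  rw [toMinors_monomial_one]
  exact .prod fun p _ => (monic_minor R p).pow

theorem degree_toMinors_monomial [Nontrivial R] (s : Pair ι →₀ ℕ) :
    MonomialOrder.lex.degree (toMinors ι R (monomial s 1)) = leadExp s := by
  have hdegree_pow (p : Pair ι) (n : ℕ) :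
      MonomialOrder.lex.degree (minor R p ^ n) = n • diagExp p := by
    rw [MonomialOrder.degree_pow_of_pow_leadingCoeff_ne_zero, degree_minor]
    rw [(monic_minor R p).leadingCoeff_eq_one, one_pow]
    exact one_ne_zero
  rw [toMinors_monomial_one, Finsupp.prod, MonomialOrder.degree_prod_of_mem_nonZeroDivisors,
    leadExp, Finsupp.weight_apply]
  · exact Finset.sum_congr rfl fun p _ => hdegree_pow p (s p)
  · intro p _
    rw [(monic_minor R p).pow.leadingCoeff_eq_one]
    exact one_mem _

theorem linearIndependent_toMinors_standard :
    LinearIndependent R fun s : {s : Pair ι →₀ ℕ // IsStandard s} =>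
      toMinors ι R (monomial s.1 1) := by
  nontriviality R
  refine linearIndependent_of_monic_of_injective_degree MonomialOrder.lex
    (fun s => monic_toMinors_monomial R s.1) fun s t hst => ?_
  simp only [degree_toMinors_monomial] at hst
  exact Subtype.ext (leadExp_injOn s.2 t.2 hst)

theorem disjoint_ker_toMinors_restrictSupport :
    Disjoint (LinearMap.ker (toMinors ι R).toLinearMap)
      (restrictSupport R {s : Pair ι →₀ ℕ | IsStandard s}) := by
  rw [restrictSupport_eq_span, Set.image_eq_range]
  exact (Submodule.range_ker_disjoint (f := (toMinors ι R).toLinearMap)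
    (v := fun s : {s : Pair ι →₀ ℕ | IsStandard s} => monomial s.1 (1 : R))
    (linearIndependent_toMinors_standard R)).symm

theorem ker_toMinors : RingHom.ker (toMinors ι R) = pluckerIdeal ι R := by
  have := Fintype.ofFinite ι
  let := Fintype.toLocallyFiniteOrder (α := ι)
  refine (Submodule.restrictScalars_injective R _ _ ?_).symm
  refine eq_of_le_of_inf_le_of_sup_le (z := restrictSupport R {s | IsStandard s})
    (pluckerIdeal_le_ker_toMinors R) ?_ ?_
  · exact (disjoint_iff_inf_le.mp (disjoint_ker_toMinors_restrictSupport R)).trans bot_le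
  · rw [pluckerIdeal_sup_restrictSupport]
    exact le_top

end Minors

theorem isDomain_tensorProduct_quotient_pluckerIdeal (K α β : Type*) [Field K]
    [LinearOrder α] [Finite α] [LinearOrder β] [Finite β] :
    IsDomain ((MvPolynomial (Pair α) K ⧸ pluckerIdeal α K) ⊗[K]
      (MvPolynomial (Pair β) K ⧸ pluckerIdeal β K)) := by
  rw [← ker_toMinors, ← ker_toMinors]
  exact isDomain_tensorProduct_quotient_ker (toMinors α K) (toMinors β K)

end Plucker

section Identification

variable {c d : ℕ}

/-- The variable of `BVar c (c + d)` identified with a Plücker coordinate of `G(2, c + 1)`: the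
coordinate `T_{ij}` is `S_{ij}` for `j ≤ c`, and `T_{i,c+1}` is `S_i`. -/
def leftVar (p : PIdx (c + 1)) : BVar c (c + d) :=
  have hi : p.1.1.val < c := by have := p.2; omega
  if hj : p.1.2.val < c then
    .inl ⟨⟨(⟨p.1.1, by omega⟩, ⟨p.1.2, by omega⟩), p.2⟩, .inl hj⟩
  else .inr ⟨p.1.1, by omega⟩

/-- The variable of `BVar c (c + d)` identified with a Plücker coordinate of `G(2, d + 1)`, whose
indices are numbered `0, …, d` here: the coordinate `T_{ij}` is `S_{c+i,c+j}` for `0 < i`, and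
`T_{0j}` is `S_{c+j}`. -/
def rightVar (p : PIdx (d + 1)) : BVar c (c + d) :=
  have hij : p.1.1.val < p.1.2.val := p.2
  if hi : p.1.1.val = 0 then .inr ⟨c + (p.1.2 - 1), by omega⟩
  else .inl ⟨⟨(⟨c + (p.1.1 - 1), by omega⟩, ⟨c + (p.1.2 - 1), by omega⟩),
    Fin.mk_lt_mk.mpr (by omega)⟩, .inr (by simp)⟩

theorem leftVar_injective : Function.Injective (leftVar : PIdx (c + 1) → BVar c (c + d)) := by
  rintro ⟨⟨⟨i, hi⟩, j, hj⟩, hij⟩ ⟨⟨⟨i', hi'⟩, j', hj'⟩, hij'⟩ h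
  grind [leftVar]

theorem rightVar_injective : Function.Injective (rightVar : PIdx (d + 1) → BVar c (c + d)) := by
  rintro ⟨⟨⟨i, hi⟩, j, hj⟩, hij⟩ ⟨⟨⟨i', hi'⟩, j', hj'⟩, hij'⟩ h
  grind [rightVar]

theorem leftVar_pair {i j : Fin (c + d)} (hij : i < j) (hj : j.val < c) :
    leftVar ⟨(⟨i, by omega⟩, ⟨j, by omega⟩), hij⟩ = .inl ⟨⟨(i, j), hij⟩, .inl hj⟩ :=
  dif_pos hj

theorem leftVar_last {i : Fin (c + d)} (hi : i.val < c) :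
    leftVar ⟨(⟨i, by omega⟩, Fin.last c), hi⟩ = .inr i :=
  dif_neg (lt_irrefl c)

theorem rightVar_pair {i j : Fin (c + d)} (hij : i < j) (hi : c ≤ i.val) :
    rightVar ⟨(⟨i - c + 1, by omega⟩, ⟨j - c + 1, by omega⟩), Fin.mk_lt_mk.mpr (by omega)⟩ =
      .inl ⟨⟨(i, j), hij⟩, .inr hi⟩ := by
  grind [rightVar]

theorem rightVar_zero {j : Fin (c + d)} (hj : c ≤ j.val) :
    rightVar ⟨(0, ⟨j - c + 1, by omega⟩), Nat.succ_pos _⟩ = .inr j := by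
  grind [rightVar]

theorem leftVar_ne_rightVar (p : PIdx (c + 1)) (q : PIdx (d + 1)) :
    (leftVar p : BVar c (c + d)) ≠ rightVar q := by
  obtain ⟨⟨⟨i, hi⟩, j, hj⟩, hij⟩ := p
  obtain ⟨⟨⟨i', hi'⟩, j', hj'⟩, hij'⟩ := q
  grind [leftVar, rightVar]

theorem bijective_sumElim_leftVar_rightVar :
    Function.Bijective (Sum.elim leftVar rightVar : _ → BVar c (c + d)) := by
  refine ⟨leftVar_injective.sumElim rightVar_injective leftVar_ne_rightVar, ?_⟩
  rintro (⟨⟨⟨i, j⟩, hij⟩, hj | hi⟩ | i)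
  · exact ⟨.inl _, leftVar_pair hij hj⟩
  · exact ⟨.inr _, (Sum.elim_inr ..).trans (rightVar_pair hij hi)⟩
  · rcases lt_or_ge i.val c with hi | hi
    · exact ⟨.inl _, leftVar_last hi⟩
    · exact ⟨.inr _, (Sum.elim_inr ..).trans (rightVar_zero hi)⟩

theorem rename_leftVar_mem_relSet {P : MvPolynomial (PIdx (c + 1)) ℂ}
    (hP : P ∈ pluckerSet (c + 1)) : rename leftVar P ∈ relSet c (c + d) := by
  obtain ⟨i, j, k, l, hij, hjk, hkl, rfl⟩ := hP
  have hk : k.val < c := by omega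
  have hj : j.val < c := by omega
  simp only [Tv, map_add, map_sub, map_mul, rename_X]
  by_cases hl : l.val < c
  · refine .inl ⟨⟨i, by omega⟩, ⟨j, by omega⟩, ⟨k, by omega⟩, ⟨l, by omega⟩, hij, hjk, hkl, hl, ?_⟩
    simp only [leftVar, SP, hj, hk, hl, dite_true]
  · refine .inr (.inl ⟨⟨i, by omega⟩, ⟨j, by omega⟩, ⟨k, by omega⟩, hij, hjk, hk, ?_⟩)
    simp only [leftVar, SP, S1, hj, hk, hl, dite_true, dite_false]

theorem rename_rightVar_mem_relSet {P : MvPolynomial (PIdx (d + 1)) ℂ}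
    (hP : P ∈ pluckerSet (d + 1)) : rename rightVar P ∈ relSet c (c + d) := by
  obtain ⟨i, j, k, l, hij, hjk, hkl, rfl⟩ := hP
  have hj : j.val ≠ 0 := by omega
  have hk : k.val ≠ 0 := by omega
  simp only [Tv, map_add, map_sub, map_mul, rename_X]
  by_cases hi : i.val = 0
  · refine .inr (.inr (.inl ⟨⟨c + (j - 1), by omega⟩, ⟨c + (k - 1), by omega⟩,
      ⟨c + (l - 1), by omega⟩, Fin.mk_lt_mk.mpr (by omega), Fin.mk_lt_mk.mpr (by omega),
      by simp, ?_⟩))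
    simp only [rightVar, SP, S1, hi, hj, hk, dite_true, dite_false]
  · refine .inr (.inr (.inr ⟨⟨c + (i - 1), by omega⟩, ⟨c + (j - 1), by omega⟩,
      ⟨c + (k - 1), by omega⟩, ⟨c + (l - 1), by omega⟩, Fin.mk_lt_mk.mpr (by omega),
      Fin.mk_lt_mk.mpr (by omega), Fin.mk_lt_mk.mpr (by omega), by simp, ?_⟩))
    simp only [rightVar, SP, hi, hj, hk, dite_false]

theorem relSet_subset : relSet c (c + d) ⊆
    rename leftVar '' pluckerSet (c + 1) ∪ rename rightVar '' pluckerSet (d + 1) := by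
  rintro _ (⟨i, j, k, l, hij, hjk, hkl, hl, rfl⟩ | ⟨i, j, k, hij, hjk, hk, rfl⟩ |
    ⟨j, k, l, hjk, hkl, hj, rfl⟩ | ⟨i, j, k, l, hij, hjk, hkl, hi, rfl⟩)
  · have hk : k.val < c := hl.trans' hkl
    have hj : j.val < c := hk.trans' hjk
    refine .inl ⟨_, ⟨⟨i, by omega⟩, ⟨j, by omega⟩, ⟨k, by omega⟩, ⟨l, by omega⟩, hij, hjk, hkl,
      rfl⟩, ?_⟩
    simp only [Tv, map_add, map_sub, map_mul, rename_X, leftVar_pair, hj, hk, hl, SP]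
  · have hj : j.val < c := hk.trans' hjk
    refine .inl ⟨_, ⟨⟨i, by omega⟩, ⟨j, by omega⟩, ⟨k, by omega⟩, Fin.last c, hij, hjk, hk,
      rfl⟩, ?_⟩
    simp only [Tv, map_add, map_sub, map_mul, rename_X, leftVar_pair, leftVar_last, hj, hk,
      SP, S1]
  · have hk : c ≤ k.val := hj.trans hjk.le
    have hl : c ≤ l.val := hk.trans hkl.le
    refine .inr ⟨_, ⟨0, ⟨j - c + 1, by omega⟩, ⟨k - c + 1, by omega⟩, ⟨l - c + 1, by omega⟩,
      Nat.succ_pos _, Fin.mk_lt_mk.mpr (by omega), Fin.mk_lt_mk.mpr (by omega), rfl⟩, ?_⟩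
    simp only [Tv, map_add, map_sub, map_mul, rename_X, rightVar_zero, hj, hk, hl,
      rightVar_pair hjk, rightVar_pair hkl, rightVar_pair (hjk.trans hkl), SP, S1]
  · have hj : c ≤ j.val := hi.trans hij.le
    have hk : c ≤ k.val := hj.trans hjk.le
    refine .inr ⟨_, ⟨⟨i - c + 1, by omega⟩, ⟨j - c + 1, by omega⟩, ⟨k - c + 1, by omega⟩,
      ⟨l - c + 1, by omega⟩, Fin.mk_lt_mk.mpr (by omega), Fin.mk_lt_mk.mpr (by omega),
      Fin.mk_lt_mk.mpr (by omega), rfl⟩, ?_⟩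
    simp only [Tv, map_add, map_sub, map_mul, rename_X, hi, hj, hk, rightVar_pair hij,
      rightVar_pair hjk, rightVar_pair hkl, rightVar_pair (hij.trans hjk),
      rightVar_pair (hjk.trans hkl), rightVar_pair (hij.trans (hjk.trans hkl)), SP]

theorem relSet_eq : relSet c (c + d) =
    rename leftVar '' pluckerSet (c + 1) ∪ rename rightVar '' pluckerSet (d + 1) := by
  refine relSet_subset.antisymm (Set.union_subset ?_ ?_)
  · rintro _ ⟨P, hP, rfl⟩
    exact rename_leftVar_mem_relSet hP
  · rintro _ ⟨P, hP, rfl⟩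
    exact rename_rightVar_mem_relSet hP

variable (c d) in
/-- The variables of `BVar c (c + d)` as the disjoint union of the Plücker coordinates of
`G(2, c + 1)` and of `G(2, d + 1)`. -/
noncomputable def varEquiv : PIdx (c + 1) ⊕ PIdx (d + 1) ≃ BVar c (c + d) :=
  Equiv.ofBijective _ bijective_sumElim_leftVar_rightVar

theorem span_relSet : Ideal.span (relSet c (c + d)) =
    ((Ideal.span (pluckerSet (c + 1))).map (rename (R := ℂ) Sum.inl) ⊔
      (Ideal.span (pluckerSet (d + 1))).map (rename (R := ℂ) Sum.inr)).map
        (renameEquiv ℂ (varEquiv c d)).toRingHom := by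
  have hleft : (renameEquiv ℂ (varEquiv c d)).toAlgHom.comp (rename Sum.inl) =
      rename leftVar := algHom_ext fun p => by simp [varEquiv]
  have hright : (renameEquiv ℂ (varEquiv c d)).toAlgHom.comp (rename Sum.inr) =
      rename rightVar := algHom_ext fun p => by simp [varEquiv]
  rw [relSet_eq, Ideal.span_union, ← Ideal.map_span, ← Ideal.map_span, ← hleft, ← hright,
    Ideal.map_sup]
  congr 1 <;> exact (Ideal.map_map _ _).symm

variable (c d) in
/-- The identification of the coordinate ring of the Plücker-type relations with the tensor
product of the coordinate rings of `G(2, c + 1)` and `G(2, d + 1)`. -/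
noncomputable def relRingEquiv :
    (MvPolynomial (BVar c (c + d)) ℂ ⧸ Ideal.span (relSet c (c + d))) ≃ₐ[ℂ]
      GrRing (c + 1) ⊗[ℂ] GrRing (d + 1) :=
  (Ideal.quotientEquivAlg _ _ (renameEquiv ℂ (varEquiv c d)) span_relSet).symm.trans
    (quotientSumAlgEquivTensor _ _)

theorem isDomain_grRing_tensorProduct_grRing (m n : ℕ) : IsDomain (GrRing m ⊗[ℂ] GrRing n) :=
  Plucker.isDomain_tensorProduct_quotient_pluckerIdeal ℂ (Fin m) (Fin n)

end Identification

/-- For `c, d > 2` and `n = c + d`, the ring `ℂ[S]/𝔟` is isomorphic (as a `ℂ`-algebra)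
to the tensor product over `ℂ` of the homogeneous coordinate rings of `G(2,c+1)` and
`G(2,d+1)`; in particular it is an integral domain. -/
theorem stmt_18 (c d : ℕ) (hc : 2 < c) (hd : 2 < d) :
    Nonempty ((MvPolynomial (BVar c (c + d)) ℂ ⧸ Ideal.span (relSet c (c + d)))
        ≃ₐ[ℂ] TensorProduct ℂ (GrRing (c + 1)) (GrRing (d + 1))) ∧
      IsDomain (MvPolynomial (BVar c (c + d)) ℂ ⧸ Ideal.span (relSet c (c + d))) := by
  have := isDomain_grRing_tensorProduct_grRing (c + 1) (d + 1)
  exact ⟨⟨relRingEquiv c d⟩, (relRingEquiv c d).toMulEquiv.isDomain _⟩
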